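/- Let f : ℝ² → ℝ² be a C^∞ map with f(0)=0 which has corank one at 0, let λ be its Jacobian determinant, and let η be any null vector field for f. Then j³f(0) is A³-equivalent to the 3-jet at 0 of (x,y) ↦ (x, y³) if and only if dλ(0) = 0, the Hessian matrix H_λ(0) has rank 1, and (η²λ)(0) ≠ 0. -/

import Mathlib

open Filter Topology

noncomputable section

/-- Directional derivative of a scalar function. -/
def dop (v : ℝ × ℝ) (g : ℝ × ℝ → ℝ) : ℝ × ℝ → ℝ :=
  fun p => fderiv ℝ g p v

/-- Partial derivative operator in the first coordinate. -/
def pdx : (ℝ × ℝ → ℝ) → ℝ × ℝ → ℝ := dop (1, 0)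

/-- Partial derivative operator in the second coordinate. -/
def pdy : (ℝ × ℝ → ℝ) → ℝ × ℝ → ℝ := dop (0, 1)

/-- Taylor coefficient `a_{ij} = ∂_x^i ∂_y^j g(0,0) / (i! j!)` of `g` at the origin. -/
def tcoeff (g : ℝ × ℝ → ℝ) (i j : ℕ) : ℝ :=
  (pdx^[i] (pdy^[j] g)) 0 / (Nat.factorial i * Nat.factorial j)

/-- The Jacobian determinant `λ_f` of a map `f : ℝ² → ℝ²`. -/
def jacDet (f : ℝ × ℝ → ℝ × ℝ) (p : ℝ × ℝ) : ℝ :=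
  (fderiv ℝ f p (1, 0)).1 * (fderiv ℝ f p (0, 1)).2 -
    (fderiv ℝ f p (1, 0)).2 * (fderiv ℝ f p (0, 1)).1

/-- `f` has corank one at `0` : the derivative of `f` at `0` has rank one. -/
def CorankOne (f : ℝ × ℝ → ℝ × ℝ) : Prop :=
  LinearMap.rank ((fderiv ℝ f 0).toLinearMap) = 1

/-- `η` is a null vector field for `f` near `0`. -/
def IsNullVF (f η : ℝ × ℝ → ℝ × ℝ) : Prop :=
  η 0 ≠ 0 ∧ ∃ U ∈ 𝓝 (0 : ℝ × ℝ),
    ContDiffOn ℝ (⊤ : ℕ∞) η U ∧ ∀ p ∈ U, jacDet f p = 0 → fderiv ℝ f p (η p) = 0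

/-- The derivative `(ηg)(p) = Dg(p)(η(p))` of `g` along the vector field `η`. -/
def etaD (η : ℝ × ℝ → ℝ × ℝ) (g : ℝ × ℝ → ℝ) : ℝ × ℝ → ℝ :=
  fun p => fderiv ℝ g p (η p)

/-- The iterated derivative `η^k g` along the vector field `η`. -/
def etaIter (η : ℝ × ℝ → ℝ × ℝ) : ℕ → (ℝ × ℝ → ℝ) → ℝ × ℝ → ℝ
  | 0, g => g
  | k + 1, g => etaD η (etaIter η k g)

/-- The Hessian matrix of second partial derivatives of `g` at `0`. -/
def hess (g : ℝ × ℝ → ℝ) : Matrix (Fin 2) (Fin 2) ℝ :=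
  !![pdx (pdx g) 0, pdx (pdy g) 0; pdy (pdx g) 0, pdy (pdy g) 0]

/-- `A^r`-equivalence of the `r`-jets at `0` of two map-germs `(ℝ²,0) → (ℝ²,0)`. -/
def JetEquiv (r : ℕ) (f g : ℝ × ℝ → ℝ × ℝ) : Prop :=
  ∃ φ ψ : ℝ × ℝ → ℝ × ℝ,
    ContDiff ℝ (⊤ : ℕ∞) φ ∧ ContDiff ℝ (⊤ : ℕ∞) ψ ∧ φ 0 = 0 ∧ ψ 0 = 0 ∧
    Function.Bijective (⇑(fderiv ℝ φ 0)) ∧ Function.Bijective (⇑(fderiv ℝ ψ 0)) ∧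
    ∀ i ≤ r, iteratedFDeriv ℝ i (ψ ∘ f ∘ φ) 0 = iteratedFDeriv ℝ i g 0

/-- `A`-equivalence of two map-germs `(ℝ²,0) → (ℝ²,0)`. -/
def AEquiv (f g : ℝ × ℝ → ℝ × ℝ) : Prop :=
  ∃ φ ψ : ℝ × ℝ → ℝ × ℝ,
    ContDiff ℝ (⊤ : ℕ∞) φ ∧ ContDiff ℝ (⊤ : ℕ∞) ψ ∧ φ 0 = 0 ∧ ψ 0 = 0 ∧
    Function.Bijective (⇑(fderiv ℝ φ 0)) ∧ Function.Bijective (⇑(fderiv ℝ ψ 0)) ∧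
    ∀ᶠ p in 𝓝 (0 : ℝ × ℝ), ψ (f (φ p)) = g p

/-- `f` has the form `(x, g(x,y))` where `g` is `C^∞` and the Taylor coefficients of `g`
of total degree `< N` at the origin are prescribed by `P`. -/
def HasForm (f : ℝ × ℝ → ℝ × ℝ) (g : ℝ × ℝ → ℝ) (N : ℕ) (P : ℕ → ℕ → ℝ) : Prop :=
  ContDiff ℝ (⊤ : ℕ∞) g ∧ (∀ p, f p = (p.1, g p)) ∧
    ∀ i j, i + j < N → tcoeff g i j = P i j

abbrev Sm (g : ℝ × ℝ → ℝ) : Prop := ContDiff ℝ (⊤ : ℕ∞) g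

/-- `Van k g` : all derivatives of order `< k` vanish at `0`. -/
def Van : ℕ → (ℝ × ℝ → ℝ) → Prop
  | 0, _ => True
  | k + 1, g => g 0 = 0 ∧ ∀ v, Van k (dop v g)

lemma sm_dop {g : ℝ × ℝ → ℝ} (hg : Sm g) (v : ℝ × ℝ) : Sm (dop v g) := by
  unfold dop
  exact (hg.fderiv_right (m := (⊤ : ℕ∞)) (by simp)).clm_apply contDiff_const

lemma Sm.da {g : ℝ × ℝ → ℝ} (hg : Sm g) (p : ℝ × ℝ) : DifferentiableAt ℝ g p :=
  hg.contDiffAt.differentiableAt (by simp)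

lemma dop_add {g h : ℝ × ℝ → ℝ} (hg : Sm g) (hh : Sm h) (v : ℝ × ℝ) :
    dop v (fun p => g p + h p) = fun p => dop v g p + dop v h p := by
  funext p; unfold dop; rw [fderiv_fun_add (hg.da p) (hh.da p)]; simp

lemma dop_sub {g h : ℝ × ℝ → ℝ} (hg : Sm g) (hh : Sm h) (v : ℝ × ℝ) :
    dop v (fun p => g p - h p) = fun p => dop v g p - dop v h p := by
  funext p; unfold dop; rw [fderiv_fun_sub (hg.da p) (hh.da p)]; simp

lemma dop_mul {g h : ℝ × ℝ → ℝ} (hg : Sm g) (hh : Sm h) (v : ℝ × ℝ) :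
    dop v (fun p => g p * h p) = fun p => dop v g p * h p + g p * dop v h p := by
  funext p; unfold dop; rw [fderiv_fun_mul (hg.da p) (hh.da p)]; simp; ring

lemma dop_const (c : ℝ) (v : ℝ × ℝ) : dop v (fun _ => c) = fun _ => 0 := by
  funext p; simp [dop]

lemma dop_fst (v : ℝ × ℝ) : dop v (fun p => p.1) = fun _ => v.1 := by
  funext p; simp [dop, fderiv_fst]

lemma dop_snd (v : ℝ × ℝ) : dop v (fun p => p.2) = fun _ => v.2 := by
  funext p; simp [dop, fderiv_snd]

lemma dop_cmul {g : ℝ × ℝ → ℝ} (hg : Sm g) (c : ℝ) (v : ℝ × ℝ) :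
    dop v (fun p => c * g p) = fun p => c * dop v g p := by
  rw [dop_mul contDiff_const hg, dop_const]; simp

lemma dop_split (g : ℝ × ℝ → ℝ) (v : ℝ × ℝ) :
    dop v g = fun p => v.1 * pdx g p + v.2 * pdy g p := by
  funext p
  have h : v = v.1 • ((1:ℝ), (0:ℝ)) + v.2 • ((0:ℝ), (1:ℝ)) := by ext <;> simp
  simp only [dop, pdx, pdy]
  conv_lhs => rw [h]
  rw [map_add, map_smul, map_smul]; simp

lemma dop_comp {g φ₁ φ₂ : ℝ × ℝ → ℝ} (hg : Sm g) (h₁ : Sm φ₁) (h₂ : Sm φ₂) (v : ℝ × ℝ) :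
    dop v (fun p => g (φ₁ p, φ₂ p)) = fun p =>
      pdx g (φ₁ p, φ₂ p) * dop v φ₁ p + pdy g (φ₁ p, φ₂ p) * dop v φ₂ p := by
  funext p
  have := congrFun (dop_split g (dop v φ₁ p, dop v φ₂ p)) (φ₁ p, φ₂ p)
  simp only at this
  rw [mul_comm (pdx g _), mul_comm (pdy g _), ← this]
  unfold dop
  rw [show (fun p => g (φ₁ p, φ₂ p)) = g ∘ (fun p => (φ₁ p, φ₂ p)) from rfl,
    fderiv_comp _ (hg.da _) ((h₁.da p).prodMk (h₂.da p)),
    (h₁.da p).fderiv_prodMk (h₂.da p)]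
  rfl

lemma dop_comm {g : ℝ × ℝ → ℝ} (hg : Sm g) (v w : ℝ × ℝ) :
    dop v (dop w g) = dop w (dop v g) := by
  have key : ∀ v w p, dop v (dop w g) p = fderiv ℝ (fderiv ℝ g) p v w := by
    intro v w p
    have h : DifferentiableAt ℝ (fderiv ℝ g) p :=
      (hg.fderiv_right (m := (⊤ : ℕ∞)) (by simp)).contDiffAt.differentiableAt (by simp)
    unfold dop
    rw [fderiv_clm_apply h (differentiableAt_const w)]
    simp
  funext p
  rw [key, key]
  have hs : IsSymmSndFDerivAt ℝ g p := hg.contDiffAt.isSymmSndFDerivAt (by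
    rw [minSmoothness_of_isRCLikeNormedField]; exact WithTop.coe_le_coe.2 (le_top (a := (2 : ℕ∞))))
  exact hs v w

lemma Van.mono {k l : ℕ} (h : l ≤ k) {g : ℝ × ℝ → ℝ} (hg : Van k g) : Van l g := by
  induction l generalizing k g with
  | zero => trivial
  | succ l ih =>
    obtain ⟨k, rfl⟩ : ∃ m, k = m + 1 := ⟨k - 1, by omega⟩
    exact ⟨hg.1, fun v => ih (by omega) (hg.2 v)⟩

lemma Van.der {k : ℕ} {g : ℝ × ℝ → ℝ} (hg : Van k g) (v : ℝ × ℝ) : Van (k - 1) (dop v g) := by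
  cases k with
  | zero => trivial
  | succ k => exact hg.2 v

lemma van_zero (k : ℕ) : Van k (fun _ => 0) := by
  induction k with
  | zero => trivial
  | succ k ih => exact ⟨rfl, fun v => by rw [dop_const]; exact ih⟩

lemma Van.add {k : ℕ} {g h : ℝ × ℝ → ℝ} (sg : Sm g) (sh : Sm h) (hg : Van k g) (hh : Van k h) :
    Van k (fun p => g p + h p) := by
  induction k generalizing g h with
  | zero => trivial
  | succ k ih =>
    refine ⟨by simp [hg.1, hh.1], fun v => ?_⟩
    rw [dop_add sg sh]
    exact ih (sm_dop sg v) (sm_dop sh v) (hg.2 v) (hh.2 v)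

lemma Van.mul {n k l : ℕ} (hn : n ≤ k + l) {g h : ℝ × ℝ → ℝ} (sg : Sm g) (sh : Sm h)
    (hg : Van k g) (hh : Van l h) : Van n (fun p => g p * h p) := by
  induction n generalizing g h k l with
  | zero => trivial
  | succ n ih =>
    constructor
    · rcases k with _ | k
      · rcases l with _ | l
        · omega
        · simp [hh.1]
      · simp [hg.1]
    · intro v
      rw [dop_mul sg sh]
      exact ((ih (by omega) (sm_dop sg v) sh (hg.der v) hh).add
        ((sm_dop sg v).mul sh) (sg.mul (sm_dop sh v)))
        (ih (by omega) sg (sm_dop sh v) hg (hh.der v))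

lemma Van.cmul {k : ℕ} {g : ℝ × ℝ → ℝ} (sg : Sm g) (hg : Van k g) (c : ℝ) :
    Van k (fun p => c * g p) :=
  Van.mul (k := 0) (by omega) contDiff_const sg trivial hg

lemma Van.sub {k : ℕ} {g h : ℝ × ℝ → ℝ} (sg : Sm g) (sh : Sm h) (hg : Van k g) (hh : Van k h) :
    Van k (fun p => g p - h p) := by
  have := hg.add sg (contDiff_const.mul sh) (hh.cmul sh (-1))
  convert this using 2; ring

lemma van_succ {k : ℕ} {g : ℝ × ℝ → ℝ} (sg : Sm g) (h0 : g 0 = 0) (hx : Van k (pdx g))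
    (hy : Van k (pdy g)) : Van (k + 1) g := by
  refine ⟨h0, fun v => ?_⟩
  rw [dop_split]
  exact (hx.cmul (sm_dop sg _) _).add (contDiff_const.mul (sm_dop sg _))
    (contDiff_const.mul (sm_dop sg _)) (hy.cmul (sm_dop sg _) _)

lemma sm_comp {g φ₁ φ₂ : ℝ × ℝ → ℝ} (hg : Sm g) (h₁ : Sm φ₁) (h₂ : Sm φ₂) :
    Sm (fun p => g (φ₁ p, φ₂ p)) := hg.comp (h₁.prodMk h₂)

lemma Van.comp {k : ℕ} {g φ₁ φ₂ : ℝ × ℝ → ℝ} (sg : Sm g) (h₁ : Sm φ₁) (h₂ : Sm φ₂)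
    (e₁ : φ₁ 0 = 0) (e₂ : φ₂ 0 = 0) (hg : Van k g) : Van k (fun p => g (φ₁ p, φ₂ p)) := by
  induction k generalizing g with
  | zero => trivial
  | succ k ih =>
    refine ⟨by simpa [e₁, e₂, Prod.mk_zero_zero] using hg.1, fun v => ?_⟩
    rw [dop_comp sg h₁ h₂]
    have sx := sm_dop sg (1, 0)
    have sy := sm_dop sg (0, 1)
    refine Van.add ((sm_comp sx h₁ h₂).mul (sm_dop h₁ v))
      ((sm_comp sy h₁ h₂).mul (sm_dop h₂ v)) ?_ ?_
    · exact Van.mul (l := 0) (by omega) (sm_comp sx h₁ h₂) (sm_dop h₁ v) (ih sx (hg.2 _)) trivial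
    · exact Van.mul (l := 0) (by omega) (sm_comp sy h₁ h₂) (sm_dop h₂ v) (ih sy (hg.2 _)) trivial

/-- dividing by a unit -/
lemma Van.of_mul {k : ℕ} {u h : ℝ × ℝ → ℝ} (su : Sm u) (sh : Sm h) (u0 : u 0 ≠ 0)
    (H : Van k (fun p => u p * h p)) : Van k h := by
  induction k generalizing h with
  | zero => trivial
  | succ k ih =>
    have hk : Van k h := ih sh (H.mono (by omega))
    refine ⟨(mul_eq_zero.1 H.1).resolve_left u0, fun v => ih (sm_dop sh v) ?_⟩
    have h1 := H.2 v
    rw [dop_mul su sh] at h1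
    have h2 : Van k (fun p => dop v u p * h p) :=
      Van.mul (k := 0) (by omega) (sm_dop su v) sh trivial hk
    have := h1.sub (((sm_dop su v).mul sh).add (su.mul (sm_dop sh v))) ((sm_dop su v).mul sh) h2
    convert this using 2; ring

lemma Van.of_comp {k : ℕ} {g φ₁ φ₂ : ℝ × ℝ → ℝ} (sg : Sm g) (h₁ : Sm φ₁) (h₂ : Sm φ₂)
    (e₁ : φ₁ 0 = 0) (e₂ : φ₂ 0 = 0)
    (hd : pdx φ₁ 0 * pdy φ₂ 0 - pdx φ₂ 0 * pdy φ₁ 0 ≠ 0)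
    (H : Van k (fun p => g (φ₁ p, φ₂ p))) : Van k g := by
  induction k generalizing g with
  | zero => trivial
  | succ k ih =>
    have a1 := sm_dop h₁ (1, 0)
    have a2 := sm_dop h₁ (0, 1)
    have b1 := sm_dop h₂ (1, 0)
    have b2 := sm_dop h₂ (0, 1)
    have sx := sm_dop sg (1, 0)
    have sy := sm_dop sg (0, 1)
    have cx := sm_comp sx h₁ h₂
    have cy := sm_comp sy h₁ h₂
    have H1 := H.2 (1, 0)
    have H2 := H.2 (0, 1)
    rw [dop_comp sg h₁ h₂] at H1 H2
    have t1 := (cx.mul a1).add (cy.mul b1)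
    have t2 := (cx.mul a2).add (cy.mul b2)
    have sd : Sm (fun p => pdx φ₁ p * pdy φ₂ p - pdx φ₂ p * pdy φ₁ p) :=
      (a1.mul b2).sub (b1.mul a2)
    refine van_succ sg (by simpa [e₁, e₂, Prod.mk_zero_zero] using H.1) (ih sx ?_) (ih sy ?_)
    · refine Van.of_mul sd cx hd ?_
      have := (Van.mul (n := k) (l := 0) (by omega) t1 b2 H1 trivial).sub (t1.mul b2) (t2.mul b1)
        (Van.mul (n := k) (l := 0) (by omega) t2 b1 H2 trivial)
      convert this using 2; simp only [pdx, pdy]; ring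
    · refine Van.of_mul sd cy hd ?_
      have := (Van.mul (n := k) (l := 0) (by omega) t2 a1 H2 trivial).sub (t2.mul a1) (t1.mul a2)
        (Van.mul (n := k) (l := 0) (by omega) t1 a2 H1 trivial)
      convert this using 2; simp only [pdx, pdy]; ring

/-- perturbing the first variable -/
lemma Van.perturb {e : ℝ × ℝ → ℝ} (se : Sm e) (e0 : e 0 = 0) {k : ℕ} (he : Van k e)
    {n j : ℕ} (hn : n + 1 ≤ j + k) {h : ℝ × ℝ → ℝ} (sh : Sm h) (hh : Van j h) :
    Van n (fun p => h (p.1 - e p, p.2) - h p) := by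
  have s1 : Sm (fun p : ℝ × ℝ => p.1 - e p) := contDiff_fst.sub se
  have s2 : Sm (fun p : ℝ × ℝ => p.2) := contDiff_snd
  induction n generalizing h j with
  | zero => trivial
  | succ n ih =>
    refine ⟨by simp [e0, Prod.mk_zero_zero], fun v => ?_⟩
    have sc := sm_comp sh s1 s2
    have sx := sm_dop sh (1, 0)
    have sy := sm_dop sh (0, 1)
    have cx := sm_comp sx s1 s2
    have cy := sm_comp sy s1 s2
    rw [dop_sub sc sh, dop_comp sh s1 s2, dop_sub contDiff_fst se, dop_fst, dop_snd, dop_split h]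
    have i1 := ih (j := j - 1) (by omega) sx (hh.der _)
    have i2 := ih (j := j - 1) (by omega) sy (hh.der _)
    have m1 : Van n (fun p => pdx h (p.1 - e p, p.2) * dop v e p) :=
      Van.mul (k := j - 1) (l := k - 1) (by omega) cx (sm_dop se v)
        (Van.comp sx s1 s2 (by simp [e0]) (by simp) (hh.der _)) (he.der v)
    have q1 := i1.cmul (cx.sub sx) v.1
    have q2 := i2.cmul (cy.sub sy) v.2
    have r1 := contDiff_const (c := v.1) |>.mul (cx.sub sx)
    have r2 := contDiff_const (c := v.2) |>.mul (cy.sub sy)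
    have := (q1.add r1 r2 q2).sub (r1.add r2) (cx.mul (sm_dop se v)) m1
    convert this using 2; simp only [pdx, pdy]; ring

lemma van_of_pdy {k : ℕ} {h : ℝ × ℝ → ℝ} (sh : Sm h) (hy : Van k (pdy h))
    (hx : ∀ i ≤ k, (pdx^[i] h) 0 = 0) : Van (k + 1) h := by
  induction k generalizing h with
  | zero => exact ⟨hx 0 le_rfl, fun _ => trivial⟩
  | succ k ih =>
    refine van_succ sh (hx 0 (by omega)) (ih (sm_dop sh _) ?_ fun i hi => ?_) hy
    · have := hy.2 (1, 0)
      unfold pdy pdx at *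
      rwa [dop_comm sh]
    · have := hx (i + 1) (by omega)
      rwa [Function.iterate_succ_apply] at this

lemma van_iff {k : ℕ} {g : ℝ × ℝ → ℝ} (sg : Sm g) :
    Van k g ↔ ∀ i < k, iteratedFDeriv ℝ i g 0 = 0 := by
  induction k generalizing g with
  | zero => simp [Van]
  | succ k ih =>
    have key : ∀ (i : ℕ) (v : ℝ × ℝ) (m : Fin i → ℝ × ℝ),
        iteratedFDeriv ℝ i (dop v g) 0 m = iteratedFDeriv ℝ i (fderiv ℝ g) 0 m v := by
      intro i v m
      have hs : ContDiff ℝ (⊤ : ℕ∞) (fderiv ℝ g) := sg.fderiv_right (by simp)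
      have : dop v g = (ContinuousLinearMap.apply ℝ ℝ v) ∘ (fderiv ℝ g) := rfl
      rw [this, ContinuousLinearMap.iteratedFDeriv_comp_left _ hs.contDiffAt
        (by exact_mod_cast le_top)]
      rfl
    constructor
    · rintro ⟨h0, h1⟩ i hi
      rcases i with _ | i
      · ext m; simpa using h0
      · ext m
        rw [iteratedFDeriv_succ_apply_right, ← key,
          (ih (sm_dop sg _)).1 (h1 _) i (by omega)]
        rfl
    · intro H
      refine ⟨?_, fun v => (ih (sm_dop sg v)).2 fun i hi => ?_⟩
      · have := congrArg (fun T => T 0) (H 0 (by omega))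
        simpa using this
      · ext m
        rw [key]
        have := congrArg (fun T => T (Fin.snoc m v)) (H (i + 1) (by omega))
        simp only [iteratedFDeriv_succ_apply_right, Fin.init_snoc, Fin.snoc_last] at this
        exact this

/-! ### Jacobian determinants in components -/

lemma sm1 {f : ℝ × ℝ → ℝ × ℝ} (hf : ContDiff ℝ (⊤ : ℕ∞) f) : Sm (fun p => (f p).1) := hf.fst
lemma sm2 {f : ℝ × ℝ → ℝ × ℝ} (hf : ContDiff ℝ (⊤ : ℕ∞) f) : Sm (fun p => (f p).2) := hf.snd

lemma fderiv_comps {f : ℝ × ℝ → ℝ × ℝ} (hf : ContDiff ℝ (⊤ : ℕ∞) f) (p v : ℝ × ℝ) :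
    fderiv ℝ f p v = (dop v (fun p => (f p).1) p, dop v (fun p => (f p).2) p) := by
  have h : DifferentiableAt ℝ f p := hf.contDiffAt.differentiableAt (by simp)
  unfold dop
  rw [fderiv.fst h, fderiv.snd h]; rfl

/-- Jacobian of a pair of functions -/
def jc (a b : ℝ × ℝ → ℝ) : ℝ × ℝ → ℝ := fun p => pdx a p * pdy b p - pdx b p * pdy a p

lemma sm_jc {a b : ℝ × ℝ → ℝ} (ha : Sm a) (hb : Sm b) : Sm (jc a b) :=
  ((sm_dop ha _).mul (sm_dop hb _)).sub ((sm_dop hb _).mul (sm_dop ha _))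

lemma jac_eq {f : ℝ × ℝ → ℝ × ℝ} (hf : ContDiff ℝ (⊤ : ℕ∞) f) :
    jacDet f = jc (fun p => (f p).1) (fun p => (f p).2) := by
  funext p
  simp only [jacDet, jc, fderiv_comps hf]; rfl

lemma jac_comp {g φ : ℝ × ℝ → ℝ × ℝ} (hg : ContDiff ℝ (⊤ : ℕ∞) g)
    (hφ : ContDiff ℝ (⊤ : ℕ∞) φ) (p : ℝ × ℝ) :
    jacDet (g ∘ φ) p = jacDet g (φ p) * jacDet φ p := by
  rw [jac_eq hg, jac_eq hφ, jac_eq (hg.comp hφ)]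
  have h1 := fun v => congrFun (dop_comp (sm1 hg) (sm1 hφ) (sm2 hφ) v) p
  have h2 := fun v => congrFun (dop_comp (sm2 hg) (sm1 hφ) (sm2 hφ) v) p
  simp only [Prod.mk.eta] at h1 h2
  simp only [jc, Function.comp_apply]
  have e : ∀ (h : ℝ × ℝ → ℝ), pdx h = dop (1, 0) h := fun _ => rfl
  have e' : ∀ (h : ℝ × ℝ → ℝ), pdy h = dop (0, 1) h := fun _ => rfl
  simp only [e, e'] at *
  rw [h1, h2, h1, h2]
  ring

lemma bij_iff {f : ℝ × ℝ → ℝ × ℝ} :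
    Function.Bijective (⇑(fderiv ℝ f 0)) ↔ jacDet f 0 ≠ 0 := by
  set A := fderiv ℝ f 0 with hA
  have ex : ∀ x y : ℝ, A (x, y) = (x * (A (1, 0)).1 + y * (A (0, 1)).1,
      x * (A (1, 0)).2 + y * (A (0, 1)).2) := by
    intro x y
    have h : (x, y) = x • ((1:ℝ), (0:ℝ)) + y • ((0:ℝ), (1:ℝ)) := by ext <;> simp
    rw [h, map_add, map_smul, map_smul]; ext <;> simp
  have hj : jacDet f 0 = (A (1, 0)).1 * (A (0, 1)).2 - (A (1, 0)).2 * (A (0, 1)).1 := rfl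
  rw [hj]
  constructor
  · intro hb h0
    have inj : ∀ v, A v = 0 → v = 0 := fun v hv => hb.1 (by rw [hv, map_zero])
    have h1 := inj ((A (0, 1)).2, -(A (1, 0)).2) (by
      rw [ex]; ext <;> simp <;> linarith)
    have h2 := inj ((A (0, 1)).1, -(A (1, 0)).1) (by
      rw [ex]; ext <;> simp <;> linarith)
    simp only [Prod.mk_eq_zero, neg_eq_zero] at h1 h2
    have := inj (1, 0) (by ext <;> simp [h1, h2])
    simp at this
  · intro hd
    have inj : Function.Injective A.toLinearMap := by
      rw [← LinearMap.ker_eq_bot, LinearMap.ker_eq_bot']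
      rintro ⟨x, y⟩ hv
      have hv' : A (x, y) = 0 := hv
      rw [ex, Prod.mk_eq_zero] at hv'
      obtain ⟨h1, h2⟩ := hv'
      rw [Prod.mk_eq_zero]
      constructor
      · refine (mul_eq_zero.1 ?_).resolve_left hd
        linear_combination (A (0, 1)).2 * h1 - (A (0, 1)).1 * h2
      · refine (mul_eq_zero.1 ?_).resolve_left hd
        linear_combination -(A (1, 0)).2 * h1 + (A (1, 0)).1 * h2
    exact ⟨inj, LinearMap.injective_iff_surjective.1 inj⟩

/-! ### Jets -/

lemma jet_iff {F G : ℝ × ℝ → ℝ × ℝ} (hF : ContDiff ℝ (⊤ : ℕ∞) F) (hG : ContDiff ℝ (⊤ : ℕ∞) G)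
    (k : ℕ) :
    (∀ i ≤ k, iteratedFDeriv ℝ i F 0 = iteratedFDeriv ℝ i G 0) ↔
      Van (k + 1) (fun p => (F p).1 - (G p).1) ∧ Van (k + 1) (fun p => (F p).2 - (G p).2) := by
  rw [van_iff ((sm1 hF).sub (sm1 hG)), van_iff ((sm2 hF).sub (sm2 hG))]
  have le : ∀ i : ℕ, (i : WithTop ℕ∞) ≤ ((⊤ : ℕ∞) : WithTop ℕ∞) := fun i => by
    exact_mod_cast le_top
  have k1 : ∀ (i : ℕ), iteratedFDeriv ℝ i (fun p => (F p).1 - (G p).1) 0 =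
      (ContinuousLinearMap.fst ℝ ℝ ℝ).compContinuousMultilinearMap
        (iteratedFDeriv ℝ i F 0 - iteratedFDeriv ℝ i G 0) := by
    intro i
    rw [← iteratedFDeriv_sub_apply (hF.contDiffAt.of_le (le i)) (hG.contDiffAt.of_le (le i)),
      ← ContinuousLinearMap.iteratedFDeriv_comp_left _ (f := F - G) (hF.sub hG).contDiffAt (le i)]
    rfl
  have k2 : ∀ (i : ℕ), iteratedFDeriv ℝ i (fun p => (F p).2 - (G p).2) 0 =
      (ContinuousLinearMap.snd ℝ ℝ ℝ).compContinuousMultilinearMap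
        (iteratedFDeriv ℝ i F 0 - iteratedFDeriv ℝ i G 0) := by
    intro i
    rw [← iteratedFDeriv_sub_apply (hF.contDiffAt.of_le (le i)) (hG.contDiffAt.of_le (le i)),
      ← ContinuousLinearMap.iteratedFDeriv_comp_left _ (f := F - G) (hF.sub hG).contDiffAt (le i)]
    rfl
  simp only [k1, k2]
  constructor
  · intro H
    constructor <;> intro i hi <;> rw [H i (by omega), sub_self] <;> ext m <;> simp
  · rintro ⟨H1, H2⟩ i hi
    rw [← sub_eq_zero]
    ext m
    · exact congrArg (fun T => T m) (H1 i (by omega))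
    · exact congrArg (fun T => T m) (H2 i (by omega))

lemma je_trans {f g φ ψ : ℝ × ℝ → ℝ × ℝ}
    (hφ : ContDiff ℝ (⊤ : ℕ∞) φ)
    (hψ : ContDiff ℝ (⊤ : ℕ∞) ψ) (φ0 : φ 0 = 0) (ψ0 : ψ 0 = 0) (jφ : jacDet φ 0 ≠ 0)
    (jψ : jacDet ψ 0 ≠ 0) (r : ℕ) (H : JetEquiv r (ψ ∘ f ∘ φ) g) : JetEquiv r f g := by
  obtain ⟨φb, ψb, a1, a2, a3, a4, a5, a6, a7⟩ := H
  rw [bij_iff] at a5 a6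
  refine ⟨φ ∘ φb, ψb ∘ ψ, hφ.comp a1, a2.comp hψ, by simp [a3, φ0], by simp [ψ0, a4], ?_, ?_, a7⟩
  · rw [bij_iff, jac_comp hφ a1, a3]; exact mul_ne_zero jφ a5
  · rw [bij_iff, jac_comp a2 hψ, ψ0]; exact mul_ne_zero a6 jψ

abbrev G3 : ℝ × ℝ → ℝ × ℝ := fun p => (p.1, p.2 ^ 3)

lemma sm_G3 : ContDiff ℝ (⊤ : ℕ∞) G3 := contDiff_fst.prodMk (contDiff_snd.pow 3)

lemma jac_id : jacDet id 0 ≠ 0 := by simp [jacDet]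

lemma coreA {f : ℝ × ℝ → ℝ × ℝ} (hf : ContDiff ℝ (⊤ : ℕ∞) f)
    (h1 : Van 4 (fun p => (f p).1 - p.1)) (h2 : Van 4 (fun p => (f p).2 - p.2 ^ 3)) :
    JetEquiv 3 f G3 := by
  refine ⟨id, id, contDiff_id, contDiff_id, rfl, rfl, bij_iff.2 jac_id, bij_iff.2 jac_id, ?_⟩
  exact (jet_iff hf sm_G3 3).2 ⟨h1, h2⟩

lemma jac_pair {a b : ℝ × ℝ → ℝ} (ha : Sm a) (hb : Sm b) :
    jacDet (fun p => (a p, b p)) = jc a b := jac_eq (ha.prodMk hb)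

lemma coreB {f : ℝ × ℝ → ℝ × ℝ} (hf : ContDiff ℝ (⊤ : ℕ∞) f) (f0 : f 0 = 0) {k l : ℕ} (hk : 2 ≤ k)
    (hl : l + 1 ≤ 2 * k)
    (H : ∀ f : ℝ × ℝ → ℝ × ℝ, ContDiff ℝ (⊤ : ℕ∞) f → f 0 = 0 →
      Van l (fun p => (f p).1 - p.1) → Van 4 (fun p => (f p).2 - p.2 ^ 3) → JetEquiv 3 f G3)
    (h1 : Van k (fun p => (f p).1 - p.1)) (h2 : Van 4 (fun p => (f p).2 - p.2 ^ 3)) :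
    JetEquiv 3 f G3 := by
  set e : ℝ × ℝ → ℝ := fun p => (f p).1 - p.1 with he
  have se : Sm e := (sm1 hf).sub contDiff_fst
  have e0 : e 0 = 0 := by simp [he, f0]
  have s1 : Sm (fun p : ℝ × ℝ => p.1 - e p) := contDiff_fst.sub se
  have s2 : Sm (fun p : ℝ × ℝ => p.2) := contDiff_snd
  have sφ := s1.prodMk s2
  have φ0 : (fun p : ℝ × ℝ => (p.1 - e p, p.2)) 0 = 0 := by simp [e0]
  refine je_trans (φ := fun p => (p.1 - e p, p.2)) (ψ := id) sφ contDiff_id φ0 rfl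
    ?_ jac_id 3 (H _ (contDiff_id.comp (hf.comp sφ)) ?_ ?_ ?_)
  · rw [jac_pair s1 s2]
    have hx := h1.mono (show 2 ≤ k from hk) |>.2 (1, 0) |>.1
    simp only [jc, pdx, pdy]
    rw [dop_sub contDiff_fst se, dop_fst, dop_snd, dop_snd]
    simp only
    rw [hx]; simp
  · simp [e0, f0, Prod.mk_zero_zero]
  · have := Van.perturb se e0 h1 (n := l) (j := k) (by omega) se h1
    convert this using 2
    simp [he]; ring
  · exact Van.comp ((sm2 hf).sub (contDiff_snd.pow 3)) s1 s2 (by simp [e0]) rfl h2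

lemma coreB' {f : ℝ × ℝ → ℝ × ℝ} (hf : ContDiff ℝ (⊤ : ℕ∞) f) (f0 : f 0 = 0)
    (h1 : Van 2 (fun p => (f p).1 - p.1)) (h2 : Van 4 (fun p => (f p).2 - p.2 ^ 3)) :
    JetEquiv 3 f G3 :=
  coreB hf f0 (k := 2) (l := 3) le_rfl (by omega) (fun g hg g0 k1 k2 =>
    coreB hg g0 (k := 3) (l := 4) (by omega) (by omega) (fun h hh _ l1 l2 => coreA hh l1 l2)
      k1 k2) h1 h2

lemma van_fst : Van 1 (fun p => p.1) := ⟨rfl, fun _ => trivial⟩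
lemma van_snd : Van 1 (fun p => p.2) := ⟨rfl, fun _ => trivial⟩

lemma van_iter {k : ℕ} {g : ℝ × ℝ → ℝ} (hg : Van k g) {i : ℕ} (hi : i < k) :
    (pdx^[i] g) 0 = 0 := by
  induction i generalizing k g with
  | zero => exact (hg.mono (show 1 ≤ k from hi)).1
  | succ i ih =>
    rw [Function.iterate_succ_apply]
    exact ih (hg.der (1, 0)) (by omega)

/-- the second component satisfies `b = (c/3) y^3 + O(4)` -/
lemma coreC3 {f : ℝ × ℝ → ℝ × ℝ} (hf : ContDiff ℝ (⊤ : ℕ∞) f) (f0 : f 0 = 0) {c : ℝ} (hc : c ≠ 0)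
    (h1 : Van 2 (fun p => (f p).1 - p.1)) (h2 : Van 4 (fun p => (f p).2 - c / 3 * p.2 ^ 3)) :
    JetEquiv 3 f G3 := by
  have s : Sm (fun p : ℝ × ℝ => 3 / c * p.2) := contDiff_const.mul contDiff_snd
  have sψ := contDiff_fst.prodMk (n := ((⊤ : ℕ∞) : WithTop ℕ∞)) s
  refine je_trans (φ := id) (ψ := fun p => (p.1, 3 / c * p.2)) contDiff_id sψ rfl (by simp)
    jac_id ?_ 3 (coreB' (sψ.comp (hf.comp contDiff_id)) (by simp [f0]) h1 ?_)
  · rw [jac_pair contDiff_fst s]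
    simp only [jc, pdx, pdy]
    rw [dop_cmul contDiff_snd, dop_cmul contDiff_snd, dop_snd, dop_snd, dop_fst, dop_fst]
    simp [hc]
  · have := h2.cmul ((sm2 hf).sub (contDiff_const.mul (contDiff_snd.pow 3))) (3 / c)
    convert this using 2
    simp only [Function.comp_apply, id]; field_simp

/-- shears in the target -/
lemma shear {f : ℝ × ℝ → ℝ × ℝ} (hf : ContDiff ℝ (⊤ : ℕ∞) f) (f0 : f 0 = 0)
    {q : ℝ × ℝ → ℝ} (r : ℝ) (n : ℕ) (hn : n ≠ 0) (hq : q = fun p => r * (f p).1 ^ n)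
    (H : jc (fun p => (f p).1) (fun p => (f p).2 - q p) = jc (fun p => (f p).1) (fun p => (f p).2) →
      JetEquiv 3 (fun p => ((f p).1, (f p).2 - q p)) G3) : JetEquiv 3 f G3 := by
  have s : Sm (fun p : ℝ × ℝ => p.2 - r * p.1 ^ n) :=
    contDiff_snd.sub (contDiff_const.mul (contDiff_fst.pow n))
  have sψ := contDiff_fst.prodMk (n := ((⊤ : ℕ∞) : WithTop ℕ∞)) s
  have hj : ∀ p, jacDet (fun p : ℝ × ℝ => (p.1, p.2 - r * p.1 ^ n)) p = 1 := by
    intro p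
    rw [jac_pair contDiff_fst s]
    simp only [jc, pdx, pdy]
    rw [dop_sub contDiff_snd (contDiff_const.mul (contDiff_fst.pow n)),
      dop_sub contDiff_snd (contDiff_const.mul (contDiff_fst.pow n)),
      dop_snd, dop_snd, dop_fst, dop_fst]
    have : dop (0, 1) (fun p : ℝ × ℝ => r * p.1 ^ n) p = 0 := by
      unfold dop
      have : HasFDerivAt (fun p : ℝ × ℝ => r * p.1 ^ n) _ p :=
        ((hasFDerivAt_fst (𝕜 := ℝ) (p := p)).pow n).const_mul r
      rw [this.fderiv]; simp
    simp only [this]; simp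
  have hcomp : (fun p : ℝ × ℝ => (p.1, p.2 - r * p.1 ^ n)) ∘ f ∘ id =
      fun p => ((f p).1, (f p).2 - q p) := by
    subst hq; rfl
  refine je_trans (φ := id) (ψ := fun p => (p.1, p.2 - r * p.1 ^ n)) contDiff_id sψ rfl
    (by simp [hn]) jac_id (by rw [hj]; simp) 3 ?_
  rw [hcomp]
  apply H
  funext p
  have := jac_comp sψ (hf.comp contDiff_id) p
  rw [hj, hcomp, one_mul, Function.comp_id] at this
  rw [← jac_eq hf, ← this, jac_eq (by rw [← hcomp]; exact sψ.comp (hf.comp contDiff_id))]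

lemma pdy_est {a b : ℝ × ℝ → ℝ} (sa : Sm a) (sb : Sm b) {c : ℝ}
    (h1 : Van 2 (fun p => a p - p.1)) {k : ℕ} (h2 : Van (k + 1) b) {l : ℕ} (hl : l ≤ 3)
    (hlk : l ≤ k + 1)
    (h3 : Van 3 (fun p => jc a b p - c * p.2 ^ 2)) :
    Van l (fun p => pdy b p - c * p.2 ^ 2) := by
  have hx := h1.2 (1, 0)
  have hy := h1.2 (0, 1)
  rw [dop_sub sa contDiff_fst, dop_fst] at hx hy
  have ax := sm_dop sa (1, 0)
  have ay := sm_dop sa (0, 1)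
  have bx := sm_dop sb (1, 0)
  have bv := sm_dop sb (0, 1)
  have m1 := Van.mul (n := l) (k := 1) (l := k) (by omega) (ax.sub contDiff_const) bv hx (h2.2 (0, 1))
  have m2 := Van.mul (n := l) (k := k) (l := 1) (by omega) bx (ay.sub contDiff_const) (h2.2 (1, 0)) hy
  have sj : Sm (fun p => jc a b p - c * p.2 ^ 2) :=
    (sm_jc sa sb).sub (contDiff_const.mul (contDiff_snd.pow 2))
  have u1 := (ax.sub (contDiff_const (c := (1:ℝ)))).mul bv
  have := ((h3.mono hl).sub sj u1 m1).add (sj.sub u1) (bx.mul (ay.sub contDiff_const)) m2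
  convert this using 2
  simp only [jc, pdx, pdy]; ring

lemma coreC2 {f : ℝ × ℝ → ℝ × ℝ} (hf : ContDiff ℝ (⊤ : ℕ∞) f) (f0 : f 0 = 0) {c : ℝ} (hc : c ≠ 0)
    (h1 : Van 2 (fun p => (f p).1 - p.1)) (h2 : Van 3 (fun p => (f p).2))
    (h3 : Van 3 (fun p => jc (fun p => (f p).1) (fun p => (f p).2) p - c * p.2 ^ 2)) :
    JetEquiv 3 f G3 := by
  have sa := sm1 hf
  have sb := sm2 hf
  have hy := pdy_est sa sb h1 h2 le_rfl le_rfl h3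
  set a : ℝ × ℝ → ℝ := fun p => (f p).1
  set b : ℝ × ℝ → ℝ := fun p => (f p).2
  set r := (pdx^[3] b) 0 / 6 with hr
  refine shear hf f0 r 3 (by norm_num) rfl fun _ => ?_
  have sq : Sm (fun p => r * (f p).1 ^ 3) := contDiff_const.mul (sa.pow 3)
  refine coreC3 (sa.prodMk (sb.sub sq)) (by simp [f0]) hc h1 ?_
  have x1 : Sm (fun p : ℝ × ℝ => p.1) := contDiff_fst
  have x2 : Sm (fun p : ℝ × ℝ => p.2) := contDiff_snd
  have sX : Sm (fun p : ℝ × ℝ => r * (p.1 * (p.1 * p.1))) := contDiff_const.mul (x1.mul (x1.mul x1))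
  have sY : Sm (fun p : ℝ × ℝ => c / 3 * (p.2 * (p.2 * p.2))) :=
    contDiff_const.mul (x2.mul (x2.mul x2))
  have main : Van 4 (fun p => b p - r * (p.1 * (p.1 * p.1)) - c / 3 * (p.2 * (p.2 * p.2))) := by
    apply van_of_pdy ((sb.sub sX).sub sY)
    · convert hy using 1
      simp only [pdy]
      rw [dop_sub (sb.sub sX) sY, dop_sub sb sX, dop_cmul (x1.mul (x1.mul x1)),
        dop_cmul (x2.mul (x2.mul x2)), dop_mul x1 (x1.mul x1), dop_mul x2 (x2.mul x2),
        dop_mul x1 x1, dop_mul x2 x2, dop_fst, dop_snd]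
      funext p; simp only; ring
    · have e1 : pdx (fun p => b p - r * (p.1 * (p.1 * p.1)) - c / 3 * (p.2 * (p.2 * p.2))) =
          fun p => pdx b p - 3 * r * (p.1 * p.1) := by
        simp only [pdx]
        rw [dop_sub (sb.sub sX) sY, dop_sub sb sX, dop_cmul (x1.mul (x1.mul x1)),
          dop_cmul (x2.mul (x2.mul x2)), dop_mul x1 (x1.mul x1), dop_mul x2 (x2.mul x2),
          dop_mul x1 x1, dop_mul x2 x2, dop_fst, dop_snd]
        funext p; simp only; ring
      have sb1 : Sm (pdx b) := sm_dop sb _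
      have sb2 : Sm (pdx (pdx b)) := sm_dop sb1 _
      have e2 : pdx (fun p => pdx b p - 3 * r * (p.1 * p.1)) =
          fun p => pdx (pdx b) p - 6 * r * p.1 := by
        unfold pdx at sb1 sb2 ⊢
        rw [dop_sub sb1 (contDiff_const.mul (x1.mul x1)), dop_cmul (x1.mul x1), dop_mul x1 x1,
          dop_fst]
        funext p; simp only; ring
      have e3 : pdx (fun p => pdx (pdx b) p - 6 * r * p.1) =
          fun p => pdx (pdx (pdx b)) p - 6 * r := by
        unfold pdx at sb1 sb2 ⊢
        rw [dop_sub sb2 (contDiff_const.mul x1), dop_cmul x1, dop_fst]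
        funext p; simp only; ring
      have z0 := van_iter h2 (i := 0) (by omega)
      have z1 := van_iter h2 (i := 1) (by omega)
      have z2 := van_iter h2 (i := 2) (by omega)
      simp only [Function.iterate_succ_apply, Function.iterate_zero_apply] at z0 z1 z2 hr
      intro i hi
      interval_cases i <;> simp only [Function.iterate_succ_apply, Function.iterate_zero_apply]
      · simp [z0]
      · rw [e1]; simp [z1]
      · rw [e1, e2]; simp [z2]
      · rw [e1, e2, e3]; simp only; rw [hr]; ring
  have t : Van 4 (fun p => (a p - p.1) * (a p * a p + a p * p.1 + p.1 * p.1)) := by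
    have va : Van 1 a := ⟨by simp [a, f0], fun _ => trivial⟩
    refine Van.mul (k := 2) (l := 2) (by omega) (sa.sub x1)
      (((sa.mul sa).add (sa.mul x1)).add (x1.mul x1)) h1 ?_
    exact ((Van.mul (by omega) sa sa va va).add (sa.mul sa) (sa.mul x1)
      (Van.mul (by omega) sa x1 va van_fst)).add ((sa.mul sa).add (sa.mul x1)) (x1.mul x1)
      (Van.mul (by omega) x1 x1 van_fst van_fst)
  have st : Sm (fun p => (a p - p.1) * (a p * a p + a p * p.1 + p.1 * p.1)) :=
    (sa.sub x1).mul (((sa.mul sa).add (sa.mul x1)).add (x1.mul x1))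
  have := main.sub ((sb.sub sX).sub sY) (contDiff_const.mul st) (t.cmul st r)
  convert this using 2
  simp only [a, b]; ring

lemma coreC1 {f : ℝ × ℝ → ℝ × ℝ} (hf : ContDiff ℝ (⊤ : ℕ∞) f) (f0 : f 0 = 0) {c : ℝ} (hc : c ≠ 0)
    (h1 : Van 2 (fun p => (f p).1 - p.1)) (h2 : Van 2 (fun p => (f p).2))
    (h3 : Van 3 (fun p => jc (fun p => (f p).1) (fun p => (f p).2) p - c * p.2 ^ 2)) :
    JetEquiv 3 f G3 := by
  have sa := sm1 hf
  have sb := sm2 hf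
  have x1 : Sm (fun p : ℝ × ℝ => p.1) := contDiff_fst
  have x2 : Sm (fun p : ℝ × ℝ => p.2) := contDiff_snd
  have hy := pdy_est (l := 2) sa sb h1 h2 (by omega) le_rfl h3
  set a : ℝ × ℝ → ℝ := fun p => (f p).1
  set b : ℝ × ℝ → ℝ := fun p => (f p).2
  have hy' : Van 2 (pdy b) := by
    have vy := (Van.mul (n := 2) (by omega) x2 x2 van_snd van_snd).cmul (x2.mul x2) c
    have := hy.add ((sm_dop sb _).sub (contDiff_const.mul (x2.pow 2)))
      (contDiff_const.mul (x2.mul x2)) vy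
    convert this using 2; simp only [pdy]; ring
  set r := (pdx^[2] b) 0 / 2 with hr
  refine shear hf f0 r 2 (by norm_num) rfl fun hj => ?_
  have sq : Sm (fun p => r * (f p).1 ^ 2) := contDiff_const.mul (sa.pow 2)
  refine coreC2 (sa.prodMk (sb.sub sq)) (by simp [f0]) hc h1 ?_ (by simp only; rw [hj]; exact h3)
  have sX : Sm (fun p : ℝ × ℝ => r * (p.1 * p.1)) := contDiff_const.mul (x1.mul x1)
  have main : Van 3 (fun p => b p - r * (p.1 * p.1)) := by
    apply van_of_pdy (sb.sub sX)
    · convert hy' using 1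
      simp only [pdy]
      rw [dop_sub sb sX, dop_cmul (x1.mul x1), dop_mul x1 x1, dop_fst]
      funext p; simp only; ring
    · have e1 : pdx (fun p => b p - r * (p.1 * p.1)) = fun p => pdx b p - 2 * r * p.1 := by
        simp only [pdx]
        rw [dop_sub sb sX, dop_cmul (x1.mul x1), dop_mul x1 x1, dop_fst]
        funext p; simp only; ring
      have sb1 : Sm (pdx b) := sm_dop sb _
      have e2 : pdx (fun p => pdx b p - 2 * r * p.1) = fun p => pdx (pdx b) p - 2 * r := by
        unfold pdx at sb1 ⊢
        rw [dop_sub sb1 (contDiff_const.mul x1), dop_cmul x1, dop_fst]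
        funext p; simp only; ring
      have z0 := van_iter h2 (i := 0) (by omega)
      have z1 := van_iter h2 (i := 1) (by omega)
      simp only [Function.iterate_succ_apply, Function.iterate_zero_apply] at z0 z1 hr
      intro i hi
      interval_cases i <;> simp only [Function.iterate_succ_apply, Function.iterate_zero_apply]
      · simp [z0]
      · rw [e1]; simp [z1]
      · rw [e1, e2]; simp only; rw [hr]; ring
  have va : Van 1 a := ⟨by simp [a, f0], fun _ => trivial⟩
  have st : Sm (fun p => (a p - p.1) * (a p + p.1)) := (sa.sub x1).mul (sa.add x1)
  have t : Van 3 (fun p => (a p - p.1) * (a p + p.1)) :=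
    Van.mul (k := 2) (l := 1) (by omega) (sa.sub x1) (sa.add x1) h1 (va.add sa x1 van_fst)
  have := main.sub (sb.sub sX) (contDiff_const.mul st) (t.cmul st r)
  convert this using 2
  simp only [a, b]; ring

lemma dop_lin (α β : ℝ) (v : ℝ × ℝ) :
    dop v (fun p => α * p.1 + β * p.2) = fun _ => α * v.1 + β * v.2 := by
  rw [dop_add (contDiff_const.mul contDiff_fst) (contDiff_const.mul contDiff_snd),
    dop_cmul contDiff_fst, dop_cmul contDiff_snd, dop_fst, dop_snd]

lemma sm_lin (α β : ℝ) : Sm (fun p => α * p.1 + β * p.2) :=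
  (contDiff_const.mul contDiff_fst).add (contDiff_const.mul contDiff_snd)

lemma sm_quad (c α β : ℝ) : Sm (fun p => c * (α * p.1 + β * p.2) ^ 2) :=
  contDiff_const.mul ((sm_lin α β).pow 2)

lemma quad_iff {g : ℝ × ℝ → ℝ} (sg : Sm g) (c α β : ℝ) :
    Van 3 (fun p => g p - c * (α * p.1 + β * p.2) ^ 2) ↔
      g 0 = 0 ∧ (∀ v, dop v g 0 = 0) ∧ ∀ v w, dop w (dop v g) 0 =
        2 * c * (α * v.1 + β * v.2) * (α * w.1 + β * w.2) := by
  have sl := sm_lin α β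
  have sq := sm_quad c α β
  have d1 : ∀ v : ℝ × ℝ, dop v (fun p => c * (α * p.1 + β * p.2) ^ 2) =
      fun p => 2 * c * (α * v.1 + β * v.2) * (α * p.1 + β * p.2) := by
    intro v
    simp only [pow_two]
    rw [dop_cmul (sl.mul sl), dop_mul sl sl, dop_lin]
    funext p; simp only; ring
  have d2 : ∀ v w : ℝ × ℝ, dop w (fun p => 2 * c * (α * v.1 + β * v.2) * (α * p.1 + β * p.2)) =
      fun p => 2 * c * (α * v.1 + β * v.2) * (α * w.1 + β * w.2) := by
    intro v w
    rw [dop_cmul sl, dop_lin]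
  have E1 : ∀ v : ℝ × ℝ, dop v (fun p => g p - c * (α * p.1 + β * p.2) ^ 2) = fun p =>
      dop v g p - 2 * c * (α * v.1 + β * v.2) * (α * p.1 + β * p.2) := by
    intro v; rw [dop_sub sg sq, d1]
  have E2 : ∀ v w : ℝ × ℝ, dop w (fun p => dop v g p - 2 * c * (α * v.1 + β * v.2) * (α * p.1 + β * p.2)) =
      fun p => dop w (dop v g) p - 2 * c * (α * v.1 + β * v.2) * (α * w.1 + β * w.2) := by
    intro v w
    rw [dop_sub (sm_dop sg v) (contDiff_const.mul sl), d2]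
  simp only [Van, E1, E2]
  constructor
  · rintro ⟨h0, h⟩
    refine ⟨by simpa using h0, fun v => by simpa using (h v).1, fun v w => ?_⟩
    exact sub_eq_zero.1 ((h v).2 w).1
  · rintro ⟨h0, h1, h2⟩
    refine ⟨by simp [h0], fun v => ⟨by simp [h1], fun w => ⟨sub_eq_zero.2 (h2 v w), fun _ => trivial⟩⟩⟩

lemma dop2 {g : ℝ × ℝ → ℝ} (sg : Sm g) (v w p : ℝ × ℝ) :
    dop w (dop v g) p = w.1 * v.1 * pdx (pdx g) p + (w.1 * v.2 + w.2 * v.1) * pdx (pdy g) p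
      + w.2 * v.2 * pdy (pdy g) p := by
  have sx : Sm (pdx g) := sm_dop sg _
  have sy : Sm (pdy g) := sm_dop sg _
  have hc : pdy (pdx g) = pdx (pdy g) := dop_comm sg _ _
  rw [dop_split g v, dop_add (contDiff_const.mul sx) (contDiff_const.mul sy), dop_cmul sx,
    dop_cmul sy, dop_split (pdx g) w, dop_split (pdy g) w, hc]
  ring

lemma eta2 {g : ℝ × ℝ → ℝ} (sg : Sm g) {η : ℝ × ℝ → ℝ × ℝ} (hη : DifferentiableAt ℝ η 0)
    (h0 : fderiv ℝ g 0 = 0) : etaIter η 2 g 0 = dop (η 0) (dop (η 0) g) 0 := by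
  have h : DifferentiableAt ℝ (fderiv ℝ g) 0 :=
    (sg.fderiv_right (m := (⊤ : ℕ∞)) (by simp)).contDiffAt.differentiableAt (by simp)
  change fderiv ℝ (fun p => fderiv ℝ g p (η p)) 0 (η 0) =
    fderiv ℝ (fun p => fderiv ℝ g p (η 0)) 0 (η 0)
  rw [fderiv_clm_apply h hη, fderiv_clm_apply h (differentiableAt_const _)]
  simp [h0]

/-- Intrinsic reformulation of the condition on `λ`. -/
def Cond (g : ℝ × ℝ → ℝ) (e : ℝ × ℝ) : Prop :=
  ∃ c α β : ℝ, c ≠ 0 ∧ α * e.1 + β * e.2 ≠ 0 ∧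
    Van 3 (fun p => g p - c * (α * p.1 + β * p.2) ^ 2)

lemma cond_iff {g : ℝ × ℝ → ℝ} (sg : Sm g) (g0 : g 0 = 0) {η : ℝ × ℝ → ℝ × ℝ}
    (hη : DifferentiableAt ℝ η 0) :
    (fderiv ℝ g 0 = 0 ∧ (hess g).rank = 1 ∧ etaIter η 2 g 0 ≠ 0) ↔ Cond g (η 0) := by
  have hc : pdy (pdx g) = pdx (pdy g) := dop_comm sg _ _
  constructor
  · rintro ⟨h1, h2, h3⟩
    rw [eta2 sg hη h1] at h3
    have hdet : (hess g).det = 0 := by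
      by_contra hd
      have hu : IsUnit (hess g) := (Matrix.isUnit_iff_isUnit_det _).2 (isUnit_iff_ne_zero.2 hd)
      have := Matrix.rank_of_isUnit _ hu
      rw [h2] at this; simp at this
    simp only [hess, Matrix.det_fin_two_of, hc] at hdet
    have hQ := h3
    rw [dop2 sg] at hQ
    set A := pdx (pdx g) 0
    set B := pdx (pdy g) 0
    set D := pdy (pdy g) 0
    set Q := (η 0).1 * (η 0).1 * A + ((η 0).1 * (η 0).2 + (η 0).2 * (η 0).1) * B
      + (η 0).2 * (η 0).2 * D with hQd
    refine ⟨1 / (2 * Q), A * (η 0).1 + B * (η 0).2, B * (η 0).1 + D * (η 0).2, by simp [hQ], ?_, ?_⟩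
    · convert hQ using 1; rw [hQd]; ring
    · rw [quad_iff sg]
      refine ⟨g0, fun v => by simp [dop, h1], fun v w => ?_⟩
      rw [dop2 sg]
      have : 2 * (1 / (2 * Q)) = 1 / Q := by field_simp
      rw [this, one_div, mul_assoc Q⁻¹, eq_inv_mul_iff_mul_eq₀ hQ, hQd]
      change _ * (w.1 * v.1 * A + (w.1 * v.2 + w.2 * v.1) * B + w.2 * v.2 * D) = _
      linear_combination ((η 0).1 * (η 0).1 * w.2 * v.2 + (η 0).2 * (η 0).2 * w.1 * v.1
        - (η 0).1 * (η 0).2 * (w.1 * v.2 + w.2 * v.1)) * hdet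
  · rintro ⟨c, α, β, c0, hl, hV⟩
    rw [quad_iff sg] at hV
    obtain ⟨-, h1, h2⟩ := hV
    have hd : fderiv ℝ g 0 = 0 := ContinuousLinearMap.ext fun v => h1 v
    have hh : hess g = Matrix.vecMulVec ![2 * c * α, 2 * c * β] ![α, β] := by
      unfold hess pdx pdy
      simp only [h2]
      ext i j
      fin_cases i <;> fin_cases j <;> simp [Matrix.vecMulVec] <;> ring
    refine ⟨hd, ?_, ?_⟩
    · apply le_antisymm
      · rw [hh]; exact Matrix.rank_vecMulVec_le _ _
      · rw [Nat.one_le_iff_ne_zero]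
        intro hz
        rw [Matrix.rank, Submodule.finrank_eq_zero, LinearMap.range_eq_bot] at hz
        have hz : hess g = 0 := by
          apply Matrix.toLin'.injective
          rw [Matrix.toLin'_apply', hz, map_zero]
        rw [hh] at hz
        have z1 := congrFun (congrFun hz 0) 0
        have z2 := congrFun (congrFun hz 1) 1
        simp [Matrix.vecMulVec, c0] at z1 z2
        apply hl; simp [z1, z2]
    · rw [eta2 sg hη hd, h2]
      exact mul_ne_zero (mul_ne_zero (mul_ne_zero two_ne_zero c0) hl) hl

lemma sm_jac {f : ℝ × ℝ → ℝ × ℝ} (hf : ContDiff ℝ (⊤ : ℕ∞) f) : Sm (jacDet f) := by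
  rw [jac_eq hf]; exact sm_jc (sm1 hf) (sm2 hf)

lemma sm_linmap (a b c d : ℝ) :
    ContDiff ℝ (⊤ : ℕ∞) (fun p : ℝ × ℝ => (a * p.1 + b * p.2, c * p.1 + d * p.2)) :=
  (sm_lin a b).prodMk (sm_lin c d)

lemma jac_linmap (a b c d : ℝ) (p : ℝ × ℝ) :
    jacDet (fun p : ℝ × ℝ => (a * p.1 + b * p.2, c * p.1 + d * p.2)) p = a * d - c * b := by
  rw [jac_pair (sm_lin a b) (sm_lin c d)]
  simp only [jc, pdx, pdy, dop_lin]; ring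

lemma backward {f : ℝ × ℝ → ℝ × ℝ} (hf : ContDiff ℝ (⊤ : ℕ∞) f) (f0 : f 0 = 0)
    (hd : fderiv ℝ f 0 ≠ 0) {e : ℝ × ℝ} (he : fderiv ℝ f 0 e = 0)
    (H : Cond (jacDet f) e) : JetEquiv 3 f G3 := by
  obtain ⟨c, α, β, c0, hl, hV⟩ := H
  set s := α * e.1 + β * e.2 with hs
  obtain ⟨w, hw⟩ : ∃ w, w = fderiv ℝ f 0 (β, -α) := ⟨_, rfl⟩
  have w0 : w ≠ 0 := by
    intro h0
    apply hd
    refine ContinuousLinearMap.ext fun v => ?_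
    have hv : v = ((v.1 * e.2 - v.2 * e.1) / s) • (β, -α) + ((α * v.1 + β * v.2) / s) • e := by
      ext <;> simp <;> field_simp <;> rw [hs] <;> ring
    rw [hv, map_add, map_smul, map_smul, he, ← hw, h0]; simp
  have N0 : w.1 ^ 2 + w.2 ^ 2 ≠ 0 := by
    intro h
    apply w0
    ext
    · simp; nlinarith [sq_nonneg w.1, sq_nonneg w.2]
    · simp; nlinarith [sq_nonneg w.1, sq_nonneg w.2]
  set N := w.1 ^ 2 + w.2 ^ 2 with hN
  set φ : ℝ × ℝ → ℝ × ℝ := fun p => (β * p.1 + e.1 / s * p.2, (-α) * p.1 + e.2 / s * p.2) with hφ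
  set ψ : ℝ × ℝ → ℝ × ℝ := fun p => (w.1 / N * p.1 + w.2 / N * p.2, (-w.2) * p.1 + w.1 * p.2) with hψ
  have sφ : ContDiff ℝ (⊤ : ℕ∞) φ := sm_linmap _ _ _ _
  have sψ : ContDiff ℝ (⊤ : ℕ∞) ψ := sm_linmap _ _ _ _
  have φ0 : φ 0 = 0 := by simp [hφ]
  have ψ0 : ψ 0 = 0 := by simp [hψ]
  have jφ : ∀ p, jacDet φ p = 1 := by
    intro p; rw [hφ, jac_linmap]; field_simp; rw [hs]; ring
  have jψ : ∀ p, jacDet ψ p = 1 := by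
    intro p; rw [hψ, jac_linmap]; field_simp; rw [hN]; ring
  have sF : ContDiff ℝ (⊤ : ℕ∞) (ψ ∘ f ∘ φ) := sψ.comp (hf.comp sφ)
  have F0 : (ψ ∘ f ∘ φ) 0 = 0 := by simp [φ0, f0, ψ0]
  have dF : ∀ v, fderiv ℝ (ψ ∘ f ∘ φ) 0 v = (v.1, 0) := by
    intro v
    have da : ∀ {g : ℝ × ℝ → ℝ × ℝ}, ContDiff ℝ (⊤ : ℕ∞) g → ∀ p, DifferentiableAt ℝ g p :=
      fun hg p => hg.contDiffAt.differentiableAt (by simp)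
    rw [fderiv_comp _ (da sψ _) (da (hf.comp sφ) _), fderiv_comp _ (da hf _) (da sφ _)]
    simp only [Function.comp_apply, ContinuousLinearMap.comp_apply, φ0, f0]
    have e1 : fderiv ℝ φ 0 v = v.1 • (β, -α) + (v.2 / s) • e := by
      rw [fderiv_comps sφ]
      simp only [hφ, dop_lin]
      ext <;> simp <;> ring
    rw [e1, map_add, map_smul, map_smul, he, ← hw, fderiv_comps sψ]
    simp only [hψ, dop_lin]
    ext
    · simp; field_simp; rw [hN]; ring
    · simp; ring
  refine je_trans sφ sψ φ0 ψ0 (by rw [jφ]; simp) (by rw [jψ]; simp) 3 ?_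
  refine coreC1 sF F0 c0 ?_ ?_ ?_
  · refine ⟨by simp only [F0]; simp, fun v => ⟨?_, fun _ => trivial⟩⟩
    rw [dop_sub (sm1 sF) contDiff_fst, dop_fst]
    have := congrArg Prod.fst (dF v)
    rw [fderiv_comps sF] at this
    exact sub_eq_zero.2 this
  · refine ⟨by simp only [F0]; simp, fun v => ⟨?_, fun _ => trivial⟩⟩
    have := congrArg Prod.snd (dF v)
    rw [fderiv_comps sF] at this
    exact this
  · rw [← jac_eq sF]
    have := Van.comp ((sm_jac hf).sub (sm_quad c α β)) (sm1 sφ) (sm2 sφ)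
      (by simp [φ0]) (by simp [φ0]) hV
    convert this using 2 with p
    rw [jac_comp sψ (hf.comp sφ), jac_comp hf sφ, jφ, jψ]
    have : α * (φ p).1 + β * (φ p).2 = p.2 := by
      simp only [hφ]; field_simp; rw [hs]; ring
    simp [this]

lemma forward {f : ℝ × ℝ → ℝ × ℝ} (hf : ContDiff ℝ (⊤ : ℕ∞) f) (f0 : f 0 = 0)
    {e : ℝ × ℝ} (e0 : e ≠ 0) (he : fderiv ℝ f 0 e = 0)
    (H : JetEquiv 3 f G3) : Cond (jacDet f) e := by
  obtain ⟨φ, ψ, sφ, sψ, φ0, ψ0, bφ, bψ, hj⟩ := H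
  have jφ := bij_iff.1 bφ
  have jψ := bij_iff.1 bψ
  have sF : ContDiff ℝ (⊤ : ℕ∞) (ψ ∘ f ∘ φ) := sψ.comp (hf.comp sφ)
  obtain ⟨h1, h2⟩ := (jet_iff sF sm_G3 3).1 hj
  have x1 : Sm (fun p : ℝ × ℝ => p.1) := contDiff_fst
  have x2 : Sm (fun p : ℝ × ℝ => p.2) := contDiff_snd
  -- the Jacobian of the composite
  have hJ : Van 3 (fun p => jacDet (ψ ∘ f ∘ φ) p - 3 * p.2 ^ 2) := by
    rw [jac_eq sF]
    have sa := sm1 sF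
    have sb := sm2 sF
    set a : ℝ × ℝ → ℝ := fun p => ((ψ ∘ f ∘ φ) p).1
    set b : ℝ × ℝ → ℝ := fun p => ((ψ ∘ f ∘ φ) p).2
    have ax := h1.2 (1, 0)
    have ay := h1.2 (0, 1)
    have bv := h2.2 (0, 1)
    have d3 : ∀ v, dop v (fun p : ℝ × ℝ => p.2 ^ 3) = fun p => 3 * v.2 * p.2 ^ 2 := by
      intro v
      have : (fun p : ℝ × ℝ => p.2 ^ 3) = fun p => p.2 * (p.2 * p.2) := by funext p; ring
      rw [this, dop_mul x2 (x2.mul x2), dop_mul x2 x2, dop_snd]; funext p; simp only; ring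
    rw [dop_sub sa x1, dop_fst] at ax ay
    rw [dop_sub sb (x2.pow 3), d3] at bv
    have sax := sm_dop sa (1, 0)
    have say := sm_dop sa (0, 1)
    have sbx := sm_dop sb (1, 0)
    have sby := sm_dop sb (0, 1)
    have u1 := sax.sub (contDiff_const (c := (1:ℝ)))
    have u2 := say.sub (contDiff_const (c := (0:ℝ)))
    have m1 := Van.mul (n := 3) (k := 3) (l := 0) (by omega) u1 sby ax trivial
    have m2 := Van.mul (n := 3) (k := 0) (l := 3) (by omega) sbx u2 trivial ay
    have u3 : Sm (fun p => dop (0, 1) b p - 3 * (1:ℝ) * p.2 ^ 2) :=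
      sby.sub (contDiff_const.mul (x2.pow 2))
    have := (bv.add u3 (u1.mul sby) m1).sub (u3.add (u1.mul sby)) (sbx.mul u2) m2
    convert this using 2
    simp only [jc, pdx, pdy]; ring
  -- the unit
  set u : ℝ × ℝ → ℝ := fun p => jacDet ψ (f (φ p)) * jacDet φ p with hu
  have su : Sm u := ((sm_jac sψ).comp (hf.comp sφ)).mul (sm_jac sφ)
  have u0 : u 0 ≠ 0 := by simp only [hu, φ0, f0]; exact mul_ne_zero jψ jφ
  -- the linear form
  obtain ⟨d, hdd⟩ : ∃ d, d = jacDet φ 0 := ⟨_, rfl⟩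
  have s1 := sm1 sφ
  have s2 := sm2 sφ
  set φ₁ : ℝ × ℝ → ℝ := fun p => (φ p).1
  set φ₂ : ℝ × ℝ → ℝ := fun p => (φ p).2
  have e1 : φ₁ 0 = 0 := by simp [φ₁, φ0]
  have e2 : φ₂ 0 = 0 := by simp [φ₂, φ0]
  have hdj : d = pdx φ₁ 0 * pdy φ₂ 0 - pdx φ₂ 0 * pdy φ₁ 0 := by rw [hdd, jac_eq sφ]; rfl
  have d0 : d ≠ 0 := hdd ▸ jφ
  set α := -(pdx φ₂ 0) / d with hα
  set β := pdx φ₁ 0 / d with hβ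
  have lin : ∀ v : ℝ × ℝ, α * dop v φ₁ 0 + β * dop v φ₂ 0 = v.2 := by
    intro v
    rw [dop_split φ₁ v, dop_split φ₂ v, hα, hβ]
    field_simp
    rw [hdj]; ring
  have sL : Sm (fun p => α * φ₁ p + β * φ₂ p) := (contDiff_const.mul s1).add (contDiff_const.mul s2)
  have hL : Van 2 (fun p => p.2 - (α * φ₁ p + β * φ₂ p)) := by
    refine ⟨by simp [e1, e2], fun v => ⟨?_, fun _ => trivial⟩⟩
    rw [dop_sub x2 sL, dop_snd, dop_add (contDiff_const.mul s1) (contDiff_const.mul s2),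
      dop_cmul s1, dop_cmul s2]
    simp only
    rw [lin]; ring
  refine ⟨3 / u 0, α, β, by simp [u0], ?_, ?_⟩
  · obtain ⟨w, hw⟩ := bφ.2 e
    have da : ∀ {g : ℝ × ℝ → ℝ × ℝ}, ContDiff ℝ (⊤ : ℕ∞) g → ∀ p, DifferentiableAt ℝ g p :=
      fun hg p => hg.contDiffAt.differentiableAt (by simp)
    have hFw : fderiv ℝ (ψ ∘ f ∘ φ) 0 w = 0 := by
      rw [fderiv_comp _ (da sψ _) (da (hf.comp sφ) _), fderiv_comp _ (da hf _) (da sφ _)]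
      simp only [Function.comp_apply, ContinuousLinearMap.comp_apply, φ0, f0]
      rw [hw, he, map_zero]
    have hw1 : w.1 = 0 := by
      have := (h1.2 w).1
      rw [dop_sub (sm1 sF) x1, dop_fst] at this
      have h' := congrArg Prod.fst hFw
      rw [fderiv_comps sF] at h'
      simp only [Prod.fst_zero] at h' this
      linarith
    have hew : e = (dop w φ₁ 0, dop w φ₂ 0) := by rw [← hw, fderiv_comps sφ]
    rw [hew]
    simp only
    rw [lin]
    intro hw2
    apply e0
    rw [← hw, show w = 0 from Prod.ext hw1 hw2, map_zero]
  · have sg := (sm_jac hf).sub (sm_quad (3 / u 0) α β)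
    refine Van.of_comp sg s1 s2 e1 e2 (hdj ▸ d0) (Van.of_mul su (sm_comp sg s1 s2) u0 ?_)
    have vL : Van 1 (fun p => α * φ₁ p + β * φ₂ p) := ⟨by simp [e1, e2], fun _ => trivial⟩
    have vs := van_snd.add x2 sL vL
    have m1 := (Van.mul (n := 3) (by omega) (x2.sub sL) (x2.add sL) hL vs).cmul
      ((x2.sub sL).mul (x2.add sL)) 3
    have vu : Van 1 (fun p => 3 - 3 / u 0 * u p) := ⟨by field_simp; ring, fun _ => trivial⟩
    have su' : Sm (fun p => 3 - 3 / u 0 * u p) := contDiff_const.sub (contDiff_const.mul su)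
    have m2 := Van.mul (n := 3) (k := 1) (l := 2) (by omega) su' (sL.mul sL) vu
      (Van.mul (by omega) sL sL vL vL)
    have sJ : Sm (fun p => jacDet (ψ ∘ f ∘ φ) p - 3 * p.2 ^ 2) :=
      (sm_jac sF).sub (contDiff_const.mul (x2.pow 2))
    have sm1' : Sm (fun p => 3 * ((p.2 - (α * φ₁ p + β * φ₂ p)) * (p.2 + (α * φ₁ p + β * φ₂ p)))) :=
      contDiff_const.mul ((x2.sub sL).mul (x2.add sL))
    have := (hJ.add sJ sm1' m1).add (sJ.add sm1') (su'.mul (sL.mul sL)) m2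
    convert this using 2 with p
    rw [jac_comp sψ (hf.comp sφ), jac_comp hf sφ]
    simp only [hu, φ₁, φ₂, Function.comp_apply, Prod.mk.eta]
    ring

theorem stmt14 (f η : ℝ × ℝ → ℝ × ℝ)
    (hf : ContDiff ℝ (⊤ : ℕ∞) f) (hf0 : f 0 = 0) (hcr : CorankOne f)
    (hη : IsNullVF f η) :
    JetEquiv 3 f (fun p => (p.1, p.2 ^ 3)) ↔
      (fderiv ℝ (jacDet f) 0 = 0 ∧ (hess (jacDet f)).rank = 1 ∧
        etaIter η 2 (jacDet f) 0 ≠ 0) := by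
  obtain ⟨η0, U, hU, hηU, hnull⟩ := hη
  have hη' : DifferentiableAt ℝ η 0 := (hηU.contDiffAt hU).differentiableAt (by simp)
  have hd : fderiv ℝ f 0 ≠ 0 := by
    intro h
    unfold CorankOne at hcr
    rw [h] at hcr
    simp at hcr
  have j0 : jacDet f 0 = 0 := by
    by_contra h
    have hb := bij_iff.2 h
    unfold CorankOne at hcr
    have hr : LinearMap.range ((fderiv ℝ f 0).toLinearMap) = ⊤ := LinearMap.range_eq_top.2 hb.2
    rw [LinearMap.rank, hr, rank_top, rank_prod'] at hcr
    simp at hcr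
    norm_num at hcr
  have he : fderiv ℝ f 0 (η 0) = 0 := hnull 0 (mem_of_mem_nhds hU) j0
  rw [cond_iff (sm_jac hf) j0 hη']
  exact ⟨forward hf hf0 η0 he, backward hf hf0 hd he⟩
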